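/- Let T ∈ (0,∞), δ ∈ (0,1], let h ∈ C(ℝ,ℝ) satisfy |h(x)| ≤ c₀(1+|x|), and let σ ∈ C([0,T] × ℝ, ℝ) be Lipschitz in space uniformly in time. Let u be a continuous function on [0,T) × ℝ that is simultaneously a viscosity subsolution and a viscosity supersolution on (0,T) × ℝ of the obstacle problem min(w(t,x) − h(x), ∂_t w − (σ(t,x)²/2) Δw) = 0, with |u(t,x)| ≤ C(1+|x|) on [0,T) × ℝ and u(0,·) δ-Hölder continuous. Then u is δ-Hölder continuous in space uniformly in time: sup_{t∈[0,T)} sup_{x≠y} |u(t,x) − u(t,y)| / |x−y|^δ < ∞. -/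

import Mathlib

/-!
The initial Hölder constant `Ku` is preserved by the flow. In one space dimension
`r ↦ |r| ^ δ` with `δ ≤ 1` is concave away from `r = 0`, so `K * |x - y| ^ δ` is a supersolution
separately in `x` and in `y` off the diagonal. No joint second-order information (the theorem on
sums) is therefore needed: freezing one of the two points already gives admissible test functions.

The obstacle `h` is merely continuous, which is compensated by the estimate
`h z ≤ u (t, y) + K * |y - z| ^ δ` (`obstacle_holder`). It holds because
`y ↦ h z - K * |y - z| ^ δ` is a subsolution away from `z`, lies below `u` at `y = z` because
`h ≤ u` (`obstacle_le`), and lies below `u (0, ·)` because `u (0, ·)` is Hölder and `h ≤ u (0, ·)`.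

For the Hölder bound itself (`sub_le_of_holder_obstacle`), suppose
`u (t, x) - u (t, y) > K * |x - y| ^ δ` somewhere, and maximise
`u (t, x) - u (s, y) - K * |x - y| ^ δ - n * (t - s) ^ 2 - ε * (penalty (t, x) + penalty (s, y))`.
For large `n` the maximiser has `x ≠ y`, positive times, and `u (t, x) > h x` by the estimate on
the obstacle, so the subsolution inequality at `(t, x)` and the supersolution inequality at `(s, y)`
are both the linear ones. Since the penalty is a strict supersolution, the first gives
`n * (t - s) < 0` and the second `n * (s - t) < 0` (`lt_of_penalised_max`), a contradiction.
-/

open scoped ENNReal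

/-- Parabolic superjet `P^{2,+} w (t,x)` relative to `D`. -/
def ParabolicSuperjet (D : Set (ℝ × ℝ)) (w : ℝ × ℝ → ℝ) (t x a p m : ℝ) : Prop :=
  ∀ ε > (0 : ℝ), ∃ δ > (0 : ℝ), ∀ s y : ℝ, (s, y) ∈ D → |s - t| + |y - x| < δ →
    w (s, y) ≤ w (t, x) + a * (s - t) + p * (y - x) + m / 2 * (y - x) ^ 2
      + ε * (|s - t| + (y - x) ^ 2)

/-- Parabolic subjet `P^{2,-} w (t,x)` relative to `D`. -/
def ParabolicSubjet (D : Set (ℝ × ℝ)) (w : ℝ × ℝ → ℝ) (t x a p m : ℝ) : Prop :=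
  ∀ ε > (0 : ℝ), ∃ δ > (0 : ℝ), ∀ s y : ℝ, (s, y) ∈ D → |s - t| + |y - x| < δ →
    w (s, y) ≥ w (t, x) + a * (s - t) + p * (y - x) + m / 2 * (y - x) ^ 2
      - ε * (|s - t| + (y - x) ^ 2)

/-! ### Jets and test functions -/

/-- The penalisation `1 / (T - s) + exp (lam * s) * (1 + y ^ 2)`: it blows up as `s → T` and as
`|y| → ∞`, and for large `lam` it is a strict supersolution of the linear equation. -/
noncomputable def penalty (T lam : ℝ) (q : ℝ × ℝ) : ℝ :=
  1 / (T - q.1) + Real.exp (lam * q.1) * (1 + q.2 ^ 2)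

/-- A function touched from above at `(t, x)` by `f s + g s * (1 + y ^ 2) + p * y`, up to a constant,
has the derivatives of that test function in its superjet; `f` and `g` need only be differentiable
at `t`, since the mixed increments `(s - t) * (y - x)` are of lower order. -/
lemma superjet_of_le {D : Set (ℝ × ℝ)} {w : ℝ × ℝ → ℝ} {t x f' g' p r : ℝ} {f g : ℝ → ℝ}
    (hf : HasDerivAt f f' t) (hg : HasDerivAt g g' t) (hr : 0 < r)
    (hle : ∀ s y, (s, y) ∈ D → |s - t| + |y - x| < r →
      w (s, y) ≤ w (t, x) + (f s - f t) + (g s * (1 + y ^ 2) - g t * (1 + x ^ 2))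
        + p * (y - x)) :
    ParabolicSuperjet D w t x (f' + g' * (1 + x ^ 2)) (p + 2 * g t * x) (2 * g t) := by
  intro η hη
  have key : ∀ {φ : ℝ → ℝ} {φ' : ℝ}, HasDerivAt φ φ' t → ∀ c > 0, ∃ ρ > 0, ∀ s, |s - t| < ρ →
      |φ s - φ t - φ' * (s - t)| ≤ c * |s - t| := by
    intro φ φ' hφ c hc
    have := (hasDerivAt_iff_isLittleO.1 hφ).def hc
    obtain ⟨ρ, hρ, H⟩ := Metric.eventually_nhds_iff.1 this
    refine ⟨ρ, hρ, fun s hs => ?_⟩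
    have := H (y := s) (by rwa [Real.dist_eq])
    simpa [Real.norm_eq_abs, mul_comm] using this
  obtain ⟨ρ₁, hρ₁, H₁⟩ := key hf (η / 3) (by positivity)
  obtain ⟨ρ₂, hρ₂, H₂⟩ := key hg (η / (3 * (1 + x ^ 2))) (by positivity)
  obtain ⟨ρ₃, hρ₃, H₃⟩ := key hg 1 one_pos
  have hc : ContinuousAt (fun y : ℝ => y ^ 2) x := by fun_prop
  obtain ⟨ρ₄, hρ₄, H₄⟩ := Metric.continuousAt_iff.1 hc (η / (3 * (|g'| + 1))) (by positivity)
  refine ⟨min r (min (min ρ₁ ρ₂) (min ρ₃ ρ₄)), by positivity, fun s y hD hsy => ?_⟩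
  simp only [lt_min_iff] at hsy
  obtain ⟨h0, ⟨h1, h2⟩, h3, h4⟩ := hsy
  have hs0 := abs_nonneg (s - t)
  have hy0 := abs_nonneg (y - x)
  have A := hle s y hD h0
  have A1 := H₁ s (by linarith)
  have A2 := H₂ s (by linarith)
  have A3 := H₃ s (by linarith)
  have A4 := H₄ (x := y) (by rw [Real.dist_eq]; linarith)
  rw [Real.dist_eq] at A4
  have B1 := (abs_le.1 A1).2
  have B2 : (g s - g t - g' * (s - t)) * (1 + x ^ 2) ≤ η / 3 * |s - t| := by
    calc _ ≤ (η / (3 * (1 + x ^ 2)) * |s - t|) * (1 + x ^ 2) := by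
          gcongr; exact (abs_le.1 A2).2
      _ = _ := by field_simp
  have B3 : |g s - g t| ≤ (|g'| + 1) * |s - t| := by
    calc |g s - g t| = |(g s - g t - g' * (s - t)) + g' * (s - t)| := by ring_nf
      _ ≤ |g s - g t - g' * (s - t)| + |g' * (s - t)| := abs_add_le _ _
      _ ≤ _ := by rw [abs_mul]; linarith
  have B4 : (g s - g t) * (y ^ 2 - x ^ 2) ≤ η / 3 * |s - t| := by
    calc _ ≤ |(g s - g t) * (y ^ 2 - x ^ 2)| := le_abs_self _
      _ = |g s - g t| * |y ^ 2 - x ^ 2| := abs_mul _ _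
      _ ≤ ((|g'| + 1) * |s - t|) * (η / (3 * (|g'| + 1))) := by gcongr
      _ = _ := by field_simp
  have : 0 ≤ η * (y - x) ^ 2 := by positivity
  nlinarith

/-- Concavity of `|·| ^ δ` away from the origin: its graph lies below a tangent line. It allows the
term `K * |x - y| ^ δ` to be replaced by an affine one in test functions. -/
lemma exists_tangent {δ r : ℝ} (hδ0 : 0 < δ) (hδ1 : δ ≤ 1) (hr : r ≠ 0) :
    ∃ p : ℝ, ∀ r', |r' - r| < |r| → |r'| ^ δ ≤ |r| ^ δ + p * (r' - r) := by
  refine ⟨|r| ^ δ * δ / r, fun r' h' => ?_⟩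
  have hs : |(r' - r) / r| < 1 := by
    rw [abs_div, div_lt_one (abs_pos.2 hr)]; exact h'
  have hs1 := (abs_lt.1 hs).1
  have e : |r'| = |r| * (1 + (r' - r) / r) := by
    rw [← abs_of_pos (show 0 < 1 + (r' - r) / r by linarith), ← abs_mul]
    congr 1; field_simp; ring
  rw [e, Real.mul_rpow (abs_nonneg _) (by linarith)]
  calc |r| ^ δ * (1 + (r' - r) / r) ^ δ ≤ |r| ^ δ * (1 + δ * ((r' - r) / r)) := by
        gcongr
        exact rpow_one_add_le_one_add_mul_self hs1.le hδ0.le hδ1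
    _ = _ := by ring

lemma hasDerivAt_const_mul_sub_sq (n s t : ℝ) :
    HasDerivAt (fun t' => n * (t' - s) ^ 2) (2 * n * (t - s)) t := by
  refine ((((hasDerivAt_id t).sub_const s).pow 2).const_mul n).congr_deriv ?_
  simp only [id]; push_cast; ring

/-- The maximum-point inequality. If `w` satisfies the linear subsolution inequality at `(t, x)` and is
touched there from above by `K * |· - y| ^ δ + n * (· - s) ^ 2 + ε * penalty` with `x ≠ y`, then the
strictness of the penalty forces the time derivative of the coupling term to be negative. -/
lemma lt_of_penalised_max {T δ K ε lam n t x s y : ℝ} {σ w : ℝ × ℝ → ℝ}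
    (hδ0 : 0 < δ) (hδ1 : δ ≤ 1) (hK : 0 ≤ K) (hε : 0 < ε) (ht : t < T)
    (hσ : σ (t, x) ^ 2 ≤ lam * (1 + x ^ 2)) (hxy : x ≠ y)
    (hjet : ∀ a p m, ParabolicSuperjet (Set.Ioo 0 T ×ˢ Set.univ) w t x a p m →
      a - σ (t, x) ^ 2 / 2 * m ≤ 0)
    (hmax : ∀ t' x', 0 < t' → t' < T → w (t', x') ≤ w (t, x)
      + K * (|x' - y| ^ δ - |x - y| ^ δ) + n * ((t' - s) ^ 2 - (t - s) ^ 2)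
      + ε * (penalty T lam (t', x') - penalty T lam (t, x))) :
    n * (t - s) < 0 := by
  obtain ⟨p, hp⟩ := exists_tangent hδ0 hδ1 (sub_ne_zero.2 hxy)
  have hf : HasDerivAt (fun t' => n * (t' - s) ^ 2 + ε * (1 / (T - t')))
      (2 * n * (t - s) + ε * (1 / (T - t) ^ 2)) t := by
    have h2 : HasDerivAt (fun t' => ε * (1 / (T - t'))) (ε * (1 / (T - t) ^ 2)) t := by
      simp only [one_div]
      refine (((hasDerivAt_id t).const_sub T).inv (sub_pos.2 ht).ne').const_mul ε
        |>.congr_deriv ?_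
      simp only [id, neg_neg, one_div]
    exact (hasDerivAt_const_mul_sub_sq n s t).add h2
  have hg : HasDerivAt (fun t' => ε * Real.exp (lam * t')) (ε * (Real.exp (lam * t) * lam)) t := by
    have := (((hasDerivAt_id t).const_mul lam).exp).const_mul ε
    simpa using this
  have J := superjet_of_le (w := w) (D := Set.Ioo 0 T ×ˢ Set.univ) (x := x) (p := K * p)
    (r := |x - y|) hf hg (abs_pos.2 (sub_ne_zero.2 hxy)) (by
      intro s' x' hD hlt
      have h1 := hmax s' x' hD.1.1 hD.1.2
      have h2 := hp (x' - y) (by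
        have := abs_nonneg (s' - t)
        have e : x' - y - (x - y) = x' - x := by ring
        rw [e]; linarith)
      have h3 := mul_le_mul_of_nonneg_left h2 hK
      simp only [penalty] at h1
      nlinarith)
  have H := hjet _ _ _ J
  have hpos : 0 < ε * (1 / (T - t) ^ 2) := by
    have : 0 < T - t := by linarith
    positivity
  have h4 : ε * Real.exp (lam * t) * σ (t, x) ^ 2
      ≤ ε * Real.exp (lam * t) * (lam * (1 + x ^ 2)) := by gcongr
  nlinarith

lemma superjet_neg {D : Set (ℝ × ℝ)} {u : ℝ × ℝ → ℝ} {t x a p m : ℝ}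
    (hj : ParabolicSuperjet D (fun q => - u q) t x a p m) :
    ParabolicSubjet D u t x (-a) (-p) (-m) := by
  intro ε hε
  obtain ⟨r, hr, H⟩ := hj ε hε
  refine ⟨r, hr, fun s y hD hl => ?_⟩
  have := H s y hD hl
  simp only at this
  nlinarith

/-! ### The penalty and the growth of the data -/

lemma continuousOn_penalty (T lam : ℝ) :
    ContinuousOn (penalty T lam) (Set.Ico 0 T ×ˢ Set.univ) := by
  unfold penalty
  refine ContinuousOn.add (ContinuousOn.div (by fun_prop) (by fun_prop) ?_) (by fun_prop)
  rintro ⟨s, y⟩ ⟨hs, -⟩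
  have := hs.2
  simp only at this ⊢
  linarith

lemma one_add_sq_le_penalty {T lam s y : ℝ} (hlam : 0 ≤ lam) (hs0 : 0 ≤ s) :
    1 / (T - s) + (1 + y ^ 2) ≤ penalty T lam (s, y) := by
  have h1 : 1 ≤ Real.exp (lam * s) := Real.one_le_exp (by positivity)
  simp only [penalty]
  nlinarith [sq_nonneg y]

/-- Sublevel sets of the penalty in `[0, T) × ℝ` are contained in compact subsets of `[0, T) × ℝ`. -/
lemma exists_box (T lam B : ℝ) (hlam : 0 ≤ lam) (hB : 0 < B) :
    ∃ S : Set (ℝ × ℝ), IsCompact S ∧ S ⊆ Set.Ico 0 T ×ˢ Set.univ ∧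
      ∀ s y, 0 ≤ s → s < T → penalty T lam (s, y) ≤ B → (s, y) ∈ S := by
  refine ⟨Set.Icc 0 (T - 1 / B) ×ˢ Set.Icc (-B) B, isCompact_Icc.prod isCompact_Icc, ?_, ?_⟩
  · rintro ⟨s, y⟩ ⟨hs, -⟩
    have : 0 < 1 / B := by positivity
    exact ⟨⟨hs.1, by linarith [hs.2]⟩, trivial⟩
  · intro s y hs0 hsT hQ
    have h1 := one_add_sq_le_penalty (T := T) (y := y) hlam hs0
    have hTs : 0 < T - s := by linarith
    have h2 : 0 < 1 / (T - s) := by positivity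
    have h3 : 1 / (T - s) ≤ B := by nlinarith [sq_nonneg y]
    refine ⟨⟨hs0, ?_⟩, ?_, ?_⟩
    · have : 1 / B ≤ T - s := (one_div_le hTs hB).1 h3
      simp only; linarith
    · simp only; nlinarith [sq_nonneg (y + 1)]
    · simp only; nlinarith [sq_nonneg (y - 1)]

/-- Linear growth is absorbed by half of the penalty, by Young's inequality. -/
lemma growth_le_penalty {T lam s y C ε : ℝ} (hlam : 0 ≤ lam) (hs0 : 0 ≤ s) (hsT : s < T)
    (hε : 0 < ε) :
    C * (1 + |y|) ≤ ε / 2 * penalty T lam (s, y) + C + C ^ 2 / (2 * ε) := by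
  have h1 := one_add_sq_le_penalty (T := T) (y := y) hlam hs0
  have h2 : 0 < 1 / (T - s) := by
    have : 0 < T - s := by linarith
    positivity
  have h3 : C * |y| ≤ ε / 2 * y ^ 2 + C ^ 2 / (2 * ε) := by
    have e : ε / 2 * y ^ 2 + C ^ 2 / (2 * ε) - C * |y| = (ε * |y| - C) ^ 2 / (2 * ε) := by
      rw [← sq_abs y]; field_simp; ring
    have : 0 ≤ (ε * |y| - C) ^ 2 / (2 * ε) := by positivity
    linarith
  nlinarith

lemma exists_sigma_bound {T L : ℝ} {σ : ℝ × ℝ → ℝ}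
    (hσcont : ContinuousOn σ (Set.Icc 0 T ×ˢ Set.univ))
    (hσLip : ∀ t ∈ Set.Icc (0 : ℝ) T, ∀ x y : ℝ, |σ (t, x) - σ (t, y)| ≤ L * |x - y|) :
    ∃ lam, 0 ≤ lam ∧ ∀ t ∈ Set.Icc (0 : ℝ) T, ∀ x, σ (t, x) ^ 2 ≤ lam * (1 + x ^ 2) := by
  have hc : ContinuousOn (fun t => σ (t, 0)) (Set.Icc 0 T) :=
    hσcont.comp (by fun_prop) (fun t ht => ⟨ht, trivial⟩)
  obtain ⟨M, hM⟩ := isCompact_Icc.exists_bound_of_continuousOn hc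
  refine ⟨2 * M ^ 2 + 2 * L ^ 2, by positivity, fun t ht x => ?_⟩
  have h1 : σ (t, 0) ^ 2 ≤ M ^ 2 := sq_le_sq' (by linarith [(abs_le.1 (hM t ht)).1])
    (abs_le.1 (hM t ht)).2
  have h2 : (σ (t, x) - σ (t, 0)) ^ 2 ≤ L ^ 2 * x ^ 2 := by
    have := hσLip t ht x 0
    rw [sub_zero] at this
    calc (σ (t, x) - σ (t, 0)) ^ 2 = |σ (t, x) - σ (t, 0)| ^ 2 := (sq_abs _).symm
      _ ≤ (L * |x|) ^ 2 := by gcongr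
      _ = _ := by rw [mul_pow, sq_abs]
  nlinarith [sq_nonneg (σ (t, x) - 2 * σ (t, 0)), mul_nonneg (sq_nonneg M) (sq_nonneg x),
    sq_nonneg L]

/-! ### Comparison with the obstacle -/

/-- The supersolution property bounds `u - h` below only where the subjet is nonempty. Such points are
dense: near any interior point, `u` plus a steep paraboloid has an interior minimum. Continuity of `u`
and `h` then gives `h ≤ u` everywhere, including at time `0`. -/
lemma obstacle_le {T : ℝ} (hT : 0 < T) {h : ℝ → ℝ} (hh : Continuous h) {σ u : ℝ × ℝ → ℝ}
    (hucont : ContinuousOn u (Set.Ico 0 T ×ˢ Set.univ))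
    (husuper : ∀ t x : ℝ, (t, x) ∈ Set.Ioo 0 T ×ˢ (Set.univ : Set ℝ) → ∀ a p m : ℝ,
      ParabolicSubjet (Set.Ioo 0 T ×ˢ Set.univ) u t x a p m →
        min (u (t, x) - h x) (a - σ (t, x) ^ 2 / 2 * m) ≥ 0)
    {t x : ℝ} (ht0 : 0 ≤ t) (htT : t < T) : h x ≤ u (t, x) := by
  have hint : ∀ t x, 0 < t → t < T → h x ≤ u (t, x) := by
    intro t x ht0 htT
    by_contra! hlt
    have hopen : IsOpen (Set.Ioo 0 T ×ˢ (Set.univ : Set ℝ)) := isOpen_Ioo.prod isOpen_univ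
    have hmem : (t, x) ∈ Set.Ioo 0 T ×ˢ (Set.univ : Set ℝ) := ⟨⟨ht0, htT⟩, trivial⟩
    have hcont' : ContinuousOn u (Set.Ioo 0 T ×ˢ Set.univ) :=
      hucont.mono (Set.prod_mono Set.Ioo_subset_Ico_self subset_rfl)
    have hcat : ContinuousAt (fun q : ℝ × ℝ => u q - h q.2) (t, x) :=
      (hcont'.continuousAt (hopen.mem_nhds hmem)).sub (by fun_prop)
    have hev : ∀ᶠ q in nhds (t, x), u q - h q.2 < 0 ∧ q ∈ Set.Ioo 0 T ×ˢ (Set.univ : Set ℝ) :=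
      (hcat.eventually_lt_const (by simpa using hlt)).and (hopen.mem_nhds hmem)
    obtain ⟨r, hr, hball⟩ := Metric.nhds_basis_closedBall.eventually_iff.1 hev
    have hcomp : IsCompact (Metric.closedBall (t, x) r) := isCompact_closedBall _ _
    have hcontB : ContinuousOn u (Metric.closedBall (t, x) r) :=
      hcont'.mono fun q hq => (hball hq).2
    obtain ⟨M, hM⟩ := hcomp.exists_bound_of_continuousOn hcontB
    -- The weight `N` makes the perturbed function larger on the sphere than at the centre.
    obtain ⟨N, hN0, hN⟩ : ∃ N : ℝ, 0 < N ∧ 2 * M < N * r ^ 2 := by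
      refine ⟨(2 * |M| + 1) / r ^ 2, by positivity, ?_⟩
      rw [div_mul_cancel₀ _ (by positivity)]
      linarith [le_abs_self M]
    obtain ⟨⟨s, y⟩, hq, hmin⟩ := hcomp.exists_isMinOn
      (f := fun q : ℝ × ℝ => u q + N * ((q.1 - t) ^ 2 + (q.2 - x) ^ 2))
      ⟨(t, x), Metric.mem_closedBall_self hr.le⟩ (hcontB.add (by fun_prop))
    have hlow : ∀ s' y', (s', y') ∈ Metric.closedBall (t, x) r →
        u (s, y) + N * ((s - t) ^ 2 + (y - x) ^ 2)
          ≤ u (s', y') + N * ((s' - t) ^ 2 + (y' - x) ^ 2) := fun s' y' h' => hmin h'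
    have hc0 := hlow t x (Metric.mem_closedBall_self hr.le)
    have b1 := (abs_le.1 (hM _ hq)).1
    have b2 := (abs_le.1 (hM _ (Metric.mem_closedBall_self hr.le))).2
    have hlt2 : (s - t) ^ 2 + (y - x) ^ 2 < r ^ 2 := by
      simp only [sub_self] at hc0
      nlinarith
    have hin : dist (s, y) (t, x) < r := by
      rw [Prod.dist_eq, max_lt_iff, Real.dist_eq, Real.dist_eq]
      constructor
      · exact abs_lt_of_sq_lt_sq (by nlinarith [sq_nonneg (y - x)]) hr.le
      · exact abs_lt_of_sq_lt_sq (by nlinarith [sq_nonneg (s - t)]) hr.le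
    have hf := hasDerivAt_const_mul_sub_sq N t s
    have J := superjet_of_le (D := Set.Ioo 0 T ×ˢ Set.univ) (w := fun q => - u q) (x := y)
      (p := - 2 * N * x) (r := r - dist (s, y) (t, x)) hf (hasDerivAt_const s N) (by linarith) (by
        intro s' y' _ hd
        have hmem' : (s', y') ∈ Metric.closedBall (t, x) r := by
          rw [Metric.mem_closedBall]
          have h1 := dist_triangle (s', y') (s, y) (t, x)
          have h2 : dist (s', y') (s, y) ≤ |s' - s| + |y' - y| := by
            rw [Prod.dist_eq, Real.dist_eq, Real.dist_eq]
            exact max_le (by linarith [abs_nonneg (y' - y)]) (by linarith [abs_nonneg (s' - s)])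
          linarith
        have := hlow s' y' hmem'
        nlinarith)
    have := husuper s y (hball hq).2 _ _ _ (superjet_neg J)
    have h1 := (le_min_iff.1 this).1
    have h2 := (hball hq).1
    simp only at h2
    linarith
  rcases ht0.eq_or_lt with rfl | h0
  · have hc : Filter.Tendsto (fun s : ℝ => u (s, x)) (nhdsWithin 0 (Set.Ioo 0 T))
        (nhds (u (0, x))) := by
      have : ContinuousOn (fun s : ℝ => u (s, x)) (Set.Ico 0 T) :=
        hucont.comp (by fun_prop) (fun s hs => ⟨hs, trivial⟩)
      exact (this 0 ⟨le_rfl, hT⟩).mono_left (nhdsWithin_mono _ Set.Ioo_subset_Ico_self)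
    have : (nhdsWithin (0 : ℝ) (Set.Ioo 0 T)).NeBot := by
      rw [nhdsWithin_Ioo_eq_nhdsGT hT]; infer_instance
    exact ge_of_tendsto hc (Filter.eventually_of_mem self_mem_nhdsWithin
      fun s hs => hint s x hs.1 hs.2)
  · exact hint t x h0 htT

lemma exists_small {m A : ℝ} (hm : 0 < m) : ∃ ε > 0, ε * A < m := by
  refine ⟨m / (|A| + 1), by positivity, ?_⟩
  rw [div_mul_eq_mul_div, div_lt_iff₀ (by positivity)]
  nlinarith [le_abs_self A]

/-- One-sided Hölder estimate between the obstacle and the solution, by comparison of `u` with the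
barrier `h z - K * |· - z| ^ δ`. The supersolution property is expressed through superjets of `-u`. -/
lemma obstacle_holder {T δ C K lam : ℝ} (hT : 0 < T) (hδ0 : 0 < δ) (hδ1 : δ ≤ 1)
    {h : ℝ → ℝ} {σ u : ℝ × ℝ → ℝ} (hlam : 0 ≤ lam)
    (hσ : ∀ t ∈ Set.Icc (0 : ℝ) T, ∀ x, σ (t, x) ^ 2 ≤ lam * (1 + x ^ 2))
    (hucont : ContinuousOn u (Set.Ico 0 T ×ˢ Set.univ))
    (husuper : ∀ t x : ℝ, (t, x) ∈ Set.Ioo 0 T ×ˢ (Set.univ : Set ℝ) → ∀ a p m : ℝ,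
      ParabolicSuperjet (Set.Ioo 0 T ×ˢ Set.univ) (fun q => - u q) t x a p m →
        a - σ (t, x) ^ 2 / 2 * m ≤ 0)
    (hobs : ∀ t x, 0 ≤ t → t < T → h x ≤ u (t, x))
    (hugrow : ∀ t x : ℝ, 0 ≤ t → t < T → |u (t, x)| ≤ C * (1 + |x|)) (hK : 0 ≤ K)
    (huHol : ∀ x y : ℝ, |u (0, x) - u (0, y)| ≤ K * |x - y| ^ δ)
    {t z y : ℝ} (ht0 : 0 ≤ t) (htT : t < T) : h z ≤ u (t, y) + K * |y - z| ^ δ := by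
  by_contra! hlt
  obtain ⟨ε, hε, hεlt⟩ := exists_small (A := penalty T lam (t, y)) (sub_pos.2 hlt)
  set F : ℝ × ℝ → ℝ := fun q => h z - u q - K * |q.2 - z| ^ δ - ε * penalty T lam q with hF
  have hFpos : 0 < F (t, y) := by simp only [hF]; linarith
  set B : ℝ := (|h z| + |C| + C ^ 2 / (2 * ε)) * (2 / ε) + 1 with hB
  have hbd : ∀ s x, 0 ≤ s → s < T → 0 ≤ F (s, x) → penalty T lam (s, x) ≤ B := by
    intro s x hs0 hsT hFn
    have h1 := growth_le_penalty (C := C) (y := x) hlam hs0 hsT hε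
    have h2 := (abs_le.1 (hugrow s x hs0 hsT)).1
    have h3 : 0 ≤ K * |x - z| ^ δ := by positivity
    simp only [hF] at hFn
    have h4 : ε / 2 * penalty T lam (s, x) ≤ |h z| + |C| + C ^ 2 / (2 * ε) := by
      linarith [le_abs_self C, le_abs_self (h z)]
    have h5 := mul_le_mul_of_nonneg_right h4 (show 0 ≤ 2 / ε by positivity)
    have e : ε / 2 * penalty T lam (s, x) * (2 / ε) = penalty T lam (s, x) := by field_simp
    linarith
  obtain ⟨S, hS, hSsub, hSmem⟩ := exists_box T lam B hlam (by positivity)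
  have hFc : ContinuousOn F (Set.Ico 0 T ×ˢ Set.univ) := by
    refine ((continuousOn_const.sub hucont).sub ?_).sub
      (continuousOn_const.mul (continuousOn_penalty T lam))
    refine Continuous.continuousOn ?_
    exact continuous_const.mul (Continuous.rpow_const (by fun_prop) fun _ => Or.inr hδ0.le)
  have hmemS : (t, y) ∈ S := hSmem t y ht0 htT (hbd t y ht0 htT hFpos.le)
  obtain ⟨⟨s, x⟩, hsx, hmax⟩ := hS.exists_isMaxOn ⟨_, hmemS⟩ (hFc.mono hSsub)
  obtain ⟨⟨hs0, hsT⟩, -⟩ := hSsub hsx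
  simp only at hs0 hsT
  have hpos : 0 < F (s, x) := hFpos.trans_le (hmax hmemS)
  have hglob : ∀ s' x', 0 ≤ s' → s' < T → F (s', x') ≤ F (s, x) := by
    intro s' x' h1 h2
    by_cases h3 : 0 ≤ F (s', x')
    · exact hmax (hSmem s' x' h1 h2 (hbd s' x' h1 h2 h3))
    · linarith
  have hpen : 0 ≤ penalty T lam (s, x) := by
    have : 0 < T - s := by linarith
    simp only [penalty]; positivity
  have hpos' : u (s, x) + K * |x - z| ^ δ < h z := by
    simp only [hF] at hpos
    nlinarith
  have hxz : x ≠ z := by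
    rintro rfl
    have := hobs s x hs0 hsT
    have h3 : 0 ≤ K * |x - x| ^ δ := by positivity
    linarith
  have hs : 0 < s := by
    rcases hs0.eq_or_lt with rfl | h0
    · have h1 := (abs_le.1 (huHol x z)).1
      have h2 := hobs 0 z le_rfl hT
      linarith
    · exact h0
  have := lt_of_penalised_max (w := fun q => - u q) (n := 0) (s := 0) (σ := σ) hδ0 hδ1 hK hε hsT
    (hσ s ⟨hs0, hsT.le⟩ x) hxz (fun a p m => husuper s x ⟨⟨hs, hsT⟩, trivial⟩ a p m) (by
      intro t' x' h1 h2
      have := hglob t' x' h1.le h2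
      simp only [hF] at this
      linarith)
  simp at this

/-! ### The Hölder estimate -/

/-- The Hölder bound, by doubling of the time and space variables, given the estimate `hobs` on the
obstacle. The hypothesis `husub` is the subsolution inequality off the contact set. -/
lemma sub_le_of_holder_obstacle {T δ C K lam : ℝ} (hδ0 : 0 < δ) (hδ1 : δ ≤ 1)
    {h : ℝ → ℝ} (hh : Continuous h) {σ u : ℝ × ℝ → ℝ} (hlam : 0 ≤ lam)
    (hσ : ∀ t ∈ Set.Icc (0 : ℝ) T, ∀ x, σ (t, x) ^ 2 ≤ lam * (1 + x ^ 2))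
    (hucont : ContinuousOn u (Set.Ico 0 T ×ˢ Set.univ))
    (husub : ∀ t x : ℝ, (t, x) ∈ Set.Ioo 0 T ×ˢ (Set.univ : Set ℝ) → h x < u (t, x) →
      ∀ a p m : ℝ, ParabolicSuperjet (Set.Ioo 0 T ×ˢ Set.univ) u t x a p m →
        a - σ (t, x) ^ 2 / 2 * m ≤ 0)
    (husuper : ∀ t x : ℝ, (t, x) ∈ Set.Ioo 0 T ×ˢ (Set.univ : Set ℝ) → ∀ a p m : ℝ,
      ParabolicSuperjet (Set.Ioo 0 T ×ˢ Set.univ) (fun q => - u q) t x a p m →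
        a - σ (t, x) ^ 2 / 2 * m ≤ 0)
    (hobs : ∀ t x y, 0 ≤ t → t < T → h x ≤ u (t, y) + K * |x - y| ^ δ)
    (hugrow : ∀ t x : ℝ, 0 ≤ t → t < T → |u (t, x)| ≤ C * (1 + |x|)) (hK : 0 ≤ K)
    (huHol : ∀ x y : ℝ, |u (0, x) - u (0, y)| ≤ K * |x - y| ^ δ)
    {t x y : ℝ} (ht0 : 0 ≤ t) (htT : t < T) : u (t, x) - u (t, y) ≤ K * |x - y| ^ δ := by
  by_contra! hlt
  obtain ⟨ε, hε, hεlt⟩ :=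
    exists_small (A := penalty T lam (t, x) + penalty T lam (t, y)) (sub_pos.2 hlt)
  set Q := penalty T lam with hQ
  -- `G` is the penalised difference before the time variables are coupled.
  set G : (ℝ × ℝ) × (ℝ × ℝ) → ℝ := fun q =>
    u q.1 - u q.2 - K * |q.1.2 - q.2.2| ^ δ - ε * (Q q.1 + Q q.2) with hG
  set c := G ((t, x), (t, y)) with hc
  have hcpos : 0 < c := by simp only [hc, hG]; linarith
  have hQpos : ∀ s z, 0 ≤ s → s < T → 0 ≤ Q (s, z) := by
    intro s z _ hsT
    have : 0 < T - s := by linarith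
    simp only [hQ, penalty]; positivity
  set B : ℝ := (2 * |C| + C ^ 2 / ε) * (2 / ε) + 1 with hB
  have hbd : ∀ s z s' z', 0 ≤ s → s < T → 0 ≤ s' → s' < T → 0 ≤ G ((s, z), (s', z')) →
      Q (s, z) ≤ B ∧ Q (s', z') ≤ B := by
    intro s z s' z' hs0 hsT hs0' hsT' hGn
    have h1 := growth_le_penalty (C := C) (y := z) hlam hs0 hsT hε
    have h1' := growth_le_penalty (C := C) (y := z') hlam hs0' hsT' hε
    have h2 := (abs_le.1 (hugrow s z hs0 hsT)).2
    have h2' := (abs_le.1 (hugrow s' z' hs0' hsT')).1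
    have h3 : 0 ≤ K * |z - z'| ^ δ := by positivity
    have e0 : C ^ 2 / (2 * ε) + C ^ 2 / (2 * ε) = C ^ 2 / ε := by field_simp; ring
    simp only [hG] at hGn
    have h4 : ε / 2 * (Q (s, z) + Q (s', z')) ≤ 2 * |C| + C ^ 2 / ε := by
      linarith [le_abs_self C]
    have h5 := mul_le_mul_of_nonneg_right h4 (show 0 ≤ 2 / ε by positivity)
    have e : ε / 2 * (Q (s, z) + Q (s', z')) * (2 / ε) = Q (s, z) + Q (s', z') := by field_simp
    have := hQpos s z hs0 hsT
    have := hQpos s' z' hs0' hsT'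
    constructor <;> linarith
  obtain ⟨S, hS, hSsub, hSmem⟩ := exists_box T lam B hlam (by positivity)
  have hSS : IsCompact (S ×ˢ S) := hS.prod hS
  have hfst : Set.MapsTo Prod.fst (S ×ˢ S) (Set.Ico 0 T ×ˢ (Set.univ : Set ℝ)) :=
    fun q hq => hSsub hq.1
  have hsnd : Set.MapsTo Prod.snd (S ×ˢ S) (Set.Ico 0 T ×ˢ (Set.univ : Set ℝ)) :=
    fun q hq => hSsub hq.2
  have hu1 := hucont.comp continuousOn_fst hfst
  have hu2 := hucont.comp continuousOn_snd hsnd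
  have hQc := continuousOn_penalty T lam
  have hGc : ContinuousOn G (S ×ˢ S) := by
    refine ((hu1.sub hu2).sub ?_).sub (continuousOn_const.mul
      ((hQc.comp continuousOn_fst hfst).add (hQc.comp continuousOn_snd hsnd)))
    refine Continuous.continuousOn ?_
    exact continuous_const.mul (Continuous.rpow_const (by fun_prop) fun _ => Or.inr hδ0.le)
  have hcS : ((t, x), (t, y)) ∈ S ×ˢ S := by
    obtain ⟨h1, h2⟩ := hbd t x t y ht0 htT ht0 htT hcpos.le
    exact ⟨hSmem _ _ ht0 htT h1, hSmem _ _ ht0 htT h2⟩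
  have hex : ∀ n : ℕ, ∃ q ∈ S ×ˢ S, c ≤ G q - n * (q.1.1 - q.2.1) ^ 2 ∧
      ∀ s z s' z', 0 ≤ s → s < T → 0 ≤ s' → s' < T →
        G ((s, z), (s', z')) - n * (s - s') ^ 2 ≤ G q - n * (q.1.1 - q.2.1) ^ 2 := by
    intro n
    obtain ⟨q, hq, hmax⟩ := hSS.exists_isMaxOn
      (f := fun q => G q - n * (q.1.1 - q.2.1) ^ 2) ⟨_, hcS⟩ (hGc.sub (by fun_prop))
    have hcq : c ≤ G q - n * (q.1.1 - q.2.1) ^ 2 := by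
      have := hmax hcS
      simpa [hc] using this
    refine ⟨q, hq, hcq, fun s z s' z' h1 h2 h3 h4 => ?_⟩
    by_cases h5 : 0 ≤ G ((s, z), (s', z'))
    · obtain ⟨h6, h7⟩ := hbd s z s' z' h1 h2 h3 h4 h5
      exact hmax (show ((s, z), (s', z')) ∈ S ×ˢ S from ⟨hSmem _ _ h1 h2 h6, hSmem _ _ h3 h4 h7⟩)
    · have : 0 ≤ (n : ℝ) * (s - s') ^ 2 := by positivity
      linarith
  choose q hqS hqc hqmax using hex
  obtain ⟨q0, hq0S, φ, hφ, hlim⟩ := hSS.tendsto_subseq hqS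
  obtain ⟨⟨t₀, x₀⟩, ⟨s₀, y₀⟩⟩ := q0
  obtain ⟨⟨ht₀, htT₀⟩, -⟩ := hSsub hq0S.1
  obtain ⟨⟨hs₀, hsT₀⟩, -⟩ := hSsub hq0S.2
  simp only at ht₀ htT₀ hs₀ hsT₀
  have hlimW : Filter.Tendsto (q ∘ φ) Filter.atTop
      (nhdsWithin ((t₀, x₀), (s₀, y₀)) (S ×ˢ S)) :=
    tendsto_nhdsWithin_iff.2 ⟨hlim, Filter.Eventually.of_forall fun n => hqS _⟩
  -- The coupling term stays bounded, so the two times have the same limit.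
  have hts : t₀ = s₀ := by
    obtain ⟨M, hM⟩ := hSS.exists_bound_of_continuousOn hGc
    have hb : ∀ n : ℕ, (n : ℝ) * ((q n).1.1 - (q n).2.1) ^ 2 ≤ M := by
      intro n
      have h1 := (abs_le.1 (hM _ (hqS n))).2
      have h2 := hqc n
      linarith
    have hM0 : 0 ≤ M := by simpa using hb 0
    have hl1 : Filter.Tendsto (fun k => ((q (φ k)).1.1 - (q (φ k)).2.1) ^ 2) Filter.atTop
        (nhds ((t₀ - s₀) ^ 2)) := by
      have : Continuous fun q : (ℝ × ℝ) × (ℝ × ℝ) => (q.1.1 - q.2.1) ^ 2 := by fun_prop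
      exact (this.tendsto _).comp hlim
    have hl2 : Filter.Tendsto (fun k => M / (φ k : ℝ)) Filter.atTop (nhds 0) :=
      (tendsto_const_div_atTop_nhds_zero_nat M).comp hφ.tendsto_atTop
    have h0 : (t₀ - s₀) ^ 2 ≤ 0 := by
      refine le_of_tendsto_of_tendsto hl1 hl2 ?_
      filter_upwards [hφ.tendsto_atTop.eventually_gt_atTop 0] with k hk
      have : (0 : ℝ) < φ k := by exact_mod_cast hk
      rw [le_div_iff₀ this]
      linarith [hb (φ k)]
    have := pow_eq_zero_iff (two_ne_zero) |>.1 (le_antisymm h0 (sq_nonneg _))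
    linarith
  subst hts
  have hG0 : c ≤ G ((t₀, x₀), (t₀, y₀)) := by
    refine ge_of_tendsto ((hGc _ hq0S).tendsto.comp hlimW) (Filter.Eventually.of_forall fun k => ?_)
    have h1 := hqc (φ k)
    have h2 : 0 ≤ (φ k : ℝ) * ((q (φ k)).1.1 - (q (φ k)).2.1) ^ 2 := by positivity
    simp only [Function.comp]
    linarith
  have hdiff : K * |x₀ - y₀| ^ δ < u (t₀, x₀) - u (t₀, y₀) := by
    simp only [hG] at hG0
    have := mul_nonneg hε.le (add_nonneg (hQpos t₀ x₀ ht₀ htT₀) (hQpos t₀ y₀ ht₀ htT₀))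
    linarith
  have hKn : 0 ≤ K * |x₀ - y₀| ^ δ := by positivity
  have hne : x₀ ≠ y₀ := by
    rintro rfl
    linarith
  have htpos : 0 < t₀ := by
    rcases ht₀.eq_or_lt with rfl | h0
    · have := (abs_le.1 (huHol x₀ y₀)).2
      linarith
    · exact h0
  have hgt : h x₀ < u (t₀, x₀) := by
    have := hobs t₀ x₀ y₀ ht₀ htT₀
    linarith
  -- All strict inequalities at the limit point persist along the subsequence.
  have ev1 : ∀ᶠ k in Filter.atTop, 0 < (q (φ k)).1.1 := by
    have : Continuous fun q : (ℝ × ℝ) × (ℝ × ℝ) => q.1.1 := by fun_prop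
    exact ((this.tendsto _).comp hlim).eventually_const_lt htpos
  have ev2 : ∀ᶠ k in Filter.atTop, 0 < (q (φ k)).2.1 := by
    have : Continuous fun q : (ℝ × ℝ) × (ℝ × ℝ) => q.2.1 := by fun_prop
    exact ((this.tendsto _).comp hlim).eventually_const_lt htpos
  have ev3 : ∀ᶠ k in Filter.atTop, (q (φ k)).1.2 - (q (φ k)).2.2 ≠ 0 := by
    have : Continuous fun q : (ℝ × ℝ) × (ℝ × ℝ) => q.1.2 - q.2.2 := by fun_prop
    exact ((this.tendsto _).comp hlim).eventually_ne (sub_ne_zero.2 hne)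
  have ev4 : ∀ᶠ k in Filter.atTop, 0 < u (q (φ k)).1 - h (q (φ k)).1.2 := by
    have : ContinuousOn (fun q : (ℝ × ℝ) × (ℝ × ℝ) => u q.1 - h q.1.2) (S ×ˢ S) :=
      hu1.sub (by fun_prop)
    exact ((this _ hq0S).tendsto.comp hlimW).eventually_const_lt (sub_pos.2 hgt)
  obtain ⟨k, e1, e2, e3, e4⟩ := (ev1.and (ev2.and (ev3.and ev4))).exists
  have hSk := hqS (φ k)
  have hmaxk := hqmax (φ k)
  generalize q (φ k) = qk at e1 e2 e3 e4 hSk hmaxk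
  generalize (φ k : ℝ) = n at hmaxk
  obtain ⟨⟨a, b⟩, ⟨a', b'⟩⟩ := qk
  simp only [hG] at e1 e2 e3 e4 hmaxk
  have haT : a < T := (hSsub hSk.1).1.2
  have haT' : a' < T := (hSsub hSk.2).1.2
  have R1 := lt_of_penalised_max (w := u) (n := n) (s := a') (σ := σ) hδ0 hδ1 hK hε haT
    (hσ a ⟨e1.le, haT.le⟩ b) (sub_ne_zero.1 e3)
    (husub a b ⟨⟨e1, haT⟩, trivial⟩ (sub_pos.1 e4)) (by
      intro s z h1 h2
      have := hmaxk s z a' b' h1.le h2 e2.le haT'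
      linarith)
  have R2 := lt_of_penalised_max (w := fun q => - u q) (n := n) (s := a) (σ := σ) hδ0 hδ1 hK hε
    haT' (hσ a' ⟨e2.le, haT'.le⟩ b') (sub_ne_zero.1 e3).symm
    (husuper a' b' ⟨⟨e2, haT'⟩, trivial⟩) (by
      intro s z h1 h2
      have := hmaxk a b s z e1.le haT h1.le h2
      rw [abs_sub_comm z b, abs_sub_comm b' b]
      linarith)
  linarith

theorem stmt_18 (T δ c₀ C L : ℝ) (hT : 0 < T) (hδ0 : 0 < δ) (hδ1 : δ ≤ 1)
    (h : ℝ → ℝ) (hhcont : Continuous h) (hc₀ : 0 < c₀)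
    (hhgrowth : ∀ x : ℝ, |h x| ≤ c₀ * (1 + |x|))
    (σ : ℝ × ℝ → ℝ) (hσcont : ContinuousOn σ (Set.Icc 0 T ×ˢ Set.univ))
    (hσLip : ∀ t ∈ Set.Icc (0 : ℝ) T, ∀ x y : ℝ, |σ (t, x) - σ (t, y)| ≤ L * |x - y|)
    (u : ℝ × ℝ → ℝ)
    (hucont : ContinuousOn u (Set.Ico 0 T ×ˢ Set.univ))
    -- u is a viscosity subsolution of the obstacle problem on (0,T) × ℝ
    (husub : ∀ t x : ℝ, (t, x) ∈ Set.Ioo 0 T ×ˢ (Set.univ : Set ℝ) → ∀ a p m : ℝ,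
      ParabolicSuperjet (Set.Ioo 0 T ×ˢ Set.univ) u t x a p m →
        min (u (t, x) - h x) (a - σ (t, x) ^ 2 / 2 * m) ≤ 0)
    -- u is also a viscosity supersolution of the obstacle problem on (0,T) × ℝ
    (husuper : ∀ t x : ℝ, (t, x) ∈ Set.Ioo 0 T ×ˢ (Set.univ : Set ℝ) → ∀ a p m : ℝ,
      ParabolicSubjet (Set.Ioo 0 T ×ˢ Set.univ) u t x a p m →
        min (u (t, x) - h x) (a - σ (t, x) ^ 2 / 2 * m) ≥ 0)
    -- linear growth
    (hC : 0 < C)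
    (hugrow : ∀ t x : ℝ, 0 ≤ t → t < T → |u (t, x)| ≤ C * (1 + |x|))
    -- δ-Hölder continuity of the initial data
    (Ku : ℝ)
    (huHol : ∀ x y : ℝ, |u (0, x) - u (0, y)| ≤ Ku * |x - y| ^ δ) :
    -- u is δ-Hölder continuous in space, uniformly in time
    ∃ K : ℝ, ∀ t ∈ Set.Ico (0 : ℝ) T, ∀ x y : ℝ,
      |u (t, x) - u (t, y)| ≤ K * |x - y| ^ δ := by
  have hK : 0 ≤ Ku := by
    have := (abs_nonneg _).trans (huHol 1 0)
    simpa using this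
  obtain ⟨lam, hlam, hσ⟩ := exists_sigma_bound hσcont hσLip
  have hobs : ∀ t x, 0 ≤ t → t < T → h x ≤ u (t, x) := fun t x h0 h1 =>
    obstacle_le hT hhcont hucont husuper h0 h1
  have hsuper' : ∀ t x : ℝ, (t, x) ∈ Set.Ioo 0 T ×ˢ (Set.univ : Set ℝ) → ∀ a p m : ℝ,
      ParabolicSuperjet (Set.Ioo 0 T ×ˢ Set.univ) (fun q => - u q) t x a p m →
        a - σ (t, x) ^ 2 / 2 * m ≤ 0 := by
    intro t x hD a p m J
    have := (le_min_iff.1 (husuper t x hD _ _ _ (superjet_neg J))).2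
    linarith
  have hsub' : ∀ t x : ℝ, (t, x) ∈ Set.Ioo 0 T ×ˢ (Set.univ : Set ℝ) → h x < u (t, x) →
      ∀ a p m : ℝ, ParabolicSuperjet (Set.Ioo 0 T ×ˢ Set.univ) u t x a p m →
        a - σ (t, x) ^ 2 / 2 * m ≤ 0 := by
    intro t x hD hlt a p m J
    rcases min_le_iff.1 (husub t x hD _ _ _ J) with h1 | h1
    · linarith
    · exact h1
  have hobs' : ∀ t x y, 0 ≤ t → t < T → h x ≤ u (t, y) + Ku * |x - y| ^ δ := by
    intro t x y h0 h1
    rw [abs_sub_comm]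
    exact obstacle_holder hT hδ0 hδ1 hlam hσ hucont hsuper' hobs hugrow hK huHol h0 h1
  have main : ∀ t ∈ Set.Ico (0 : ℝ) T, ∀ x y : ℝ, u (t, x) - u (t, y) ≤ Ku * |x - y| ^ δ :=
    fun t ht x y => sub_le_of_holder_obstacle hδ0 hδ1 hhcont hlam hσ hucont hsub' hsuper'
      hobs' hugrow hK huHol ht.1 ht.2
  refine ⟨Ku, fun t ht x y => abs_le.2 ⟨?_, main t ht x y⟩⟩
  have := main t ht y x
  rw [abs_sub_comm] at this
  linarith
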